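/- For each fixed u > 0, ∫₀^{1} v⁵ · (4u²(1+u²) + v²)^{−7/2} · (1−v²)^{−1/2} dv = (4/15) · (1+2u²)^{−6} · u^{−1} · (1+u²)^{−1/2}. -/

import Mathlib

open Real

/-! With `a = 4u²(1 + u²)`, so that `a + 1 = (1 + 2u²)²` and `√a = 2u√(1 + u²)`, the substitution
`x = √(a(1 - v²)/(a + v²))` carries `[0, 1]` to itself with reversed orientation. Since
`1 - x² = (a + 1)v²/(a + v²)`, it absorbs the singularity at `v = 1` into `dx` and turns the
integrand into a constant multiple of `(1 - x²)²`. -/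

section RationalCosine

/-- The new integration variable `x`, as a function of `v`. It is the cosine of the angle in
`[0, π/2]` whose squared sine is `(a + 1) v² / (a + v²)`, for `0 < a` and `v ∈ [0, 1]`. -/
noncomputable def rationalCos (a v : ℝ) : ℝ := √(a * (1 - v ^ 2) / (a + v ^ 2))

variable {a v : ℝ}

lemma rationalCos_zero (ha : a ≠ 0) : rationalCos a 0 = 1 := by
  simp [rationalCos, ha]

lemma rationalCos_one : rationalCos a 1 = 0 := by
  simp [rationalCos]

lemma one_sub_rationalCos_sq (ha : 0 < a) (hv : v ^ 2 ≤ 1) :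
    1 - rationalCos a v ^ 2 = (a + 1) * v ^ 2 / (a + v ^ 2) := by
  rw [rationalCos, sq_sqrt (div_nonneg (mul_nonneg ha.le (sub_nonneg.2 hv)) (by positivity))]
  field_simp
  ring

lemma continuous_rationalCos (ha : 0 < a) : Continuous (rationalCos a) :=
  (Continuous.div (by fun_prop) (by fun_prop) fun v ↦ by positivity).sqrt

lemma hasDerivAt_rationalCos (ha : 0 < a) (hv : v ^ 2 < 1) :
    HasDerivAt (rationalCos a)
      (-(√a * (a + 1) * v / ((a + v ^ 2) * √(a + v ^ 2) * √(1 - v ^ 2)))) v := by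
  have hs : 0 < a + v ^ 2 := by positivity
  have hw : 0 < 1 - v ^ 2 := sub_pos.2 hv
  have hquot : HasDerivAt (fun v ↦ a * (1 - v ^ 2) / (a + v ^ 2))
      (-(2 * a * (a + 1) * v) / (a + v ^ 2) ^ 2) v := by
    have hsq : HasDerivAt (fun v : ℝ ↦ v ^ 2) (2 * v) v := by simpa using hasDerivAt_pow 2 v
    refine (((hsq.const_sub 1).const_mul a).fun_div (hsq.const_add a) hs.ne').congr_deriv ?_
    ring
  refine (hquot.sqrt (by positivity)).congr_deriv ?_
  rw [sqrt_div (by positivity), sqrt_mul ha.le]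
  have hsqrt_a : √a ^ 2 = a := sq_sqrt ha.le
  have hsqrt_s : √(a + v ^ 2) ^ 2 = a + v ^ 2 := sq_sqrt hs.le
  field_simp
  rw [hsqrt_a, hsqrt_s]
  field_simp

lemma integral_smul_comp_rationalCos {E : Type*} [NormedAddCommGroup E] [NormedSpace ℝ E]
    (ha : 0 < a) (g : ℝ → E) :
    ∫ v in (0 : ℝ)..1, (√a * (a + 1) * v / ((a + v ^ 2) * √(a + v ^ 2) * √(1 - v ^ 2))) •
        g (rationalCos a v)
      = ∫ x in (0 : ℝ)..1, g x := by
  have hIoo {v : ℝ} (hv : v ∈ Set.Ioo (min 0 1) (max 0 1)) : 0 < v ∧ v < 1 := by simpa using hv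
  have hsubst := intervalIntegral.integral_deriv_smul_comp_of_deriv_nonpos (g := g)
    (continuous_rationalCos ha).continuousOn
    (fun v hv ↦ hasDerivAt_rationalCos ha (pow_lt_one₀ (hIoo hv).1.le (hIoo hv).2 two_ne_zero))
    (fun v hv ↦ by
      have hv_pos : 0 < v := (hIoo hv).1
      exact neg_nonpos.2 (by positivity))
  rw [rationalCos_zero ha.ne', rationalCos_one, intervalIntegral.integral_symm 0 1] at hsubst
  simpa only [Function.comp_apply, neg_smul, intervalIntegral.integral_neg, neg_inj] using hsubst

end RationalCosine

lemma integral_one_sub_sq_pow (n : ℕ) :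
    ∫ x in (0 : ℝ)..1, (1 - x ^ 2) ^ n
      = ∏ i ∈ Finset.range n, (2 * (i : ℝ) + 2) / (2 * i + 3) := by
  calc ∫ x in (0 : ℝ)..1, (1 - x ^ 2) ^ n
      = ∫ θ in (0 : ℝ)..π / 2, cos θ ^ (2 * n + 1) := by
        simpa using (integral_sin_pow_mul_cos_pow_odd (a := 0) (b := π / 2) 0 n).symm
    _ = 1 / 2 * ∫ θ in (0 : ℝ)..π, sin θ ^ (2 * n + 1) := EulerSine.integral_cos_pow_eq _
    _ = ∏ i ∈ Finset.range n, (2 * (i : ℝ) + 2) / (2 * i + 3) := by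
        rw [integral_sin_pow_odd]
        ring

lemma rpow_natCast_add_three_halves {s : ℝ} (hs : 0 ≤ s) (n : ℕ) :
    s ^ ((n : ℝ) + 3 / 2) = s ^ (n + 1) * √s := by
  rw [sqrt_eq_rpow, ← rpow_natCast, ← rpow_add_of_nonneg hs (by positivity) (by positivity)]
  push_cast
  ring_nf

theorem integral_pow_div_rpow_mul_sqrt {a : ℝ} (ha : 0 < a) (n : ℕ) :
    ∫ v in (0 : ℝ)..1, v ^ (2 * n + 1) / ((a + v ^ 2) ^ ((n : ℝ) + 3 / 2) * √(1 - v ^ 2))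
      = (∏ i ∈ Finset.range n, (2 * (i : ℝ) + 2) / (2 * i + 3)) / ((a + 1) ^ (n + 1) * √a) := by
  calc ∫ v in (0 : ℝ)..1, v ^ (2 * n + 1) / ((a + v ^ 2) ^ ((n : ℝ) + 3 / 2) * √(1 - v ^ 2))
      = ∫ v in (0 : ℝ)..1, (√a * (a + 1) * v / ((a + v ^ 2) * √(a + v ^ 2) * √(1 - v ^ 2))) •
          ((1 - rationalCos a v ^ 2) ^ n / ((a + 1) ^ (n + 1) * √a)) := by
        refine intervalIntegral.integral_congr fun v hv ↦ ?_
        rw [Set.uIcc_of_le zero_le_one] at hv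
        simp only [smul_eq_mul]
        rw [one_sub_rationalCos_sq ha (pow_le_one₀ hv.1 hv.2),
          rpow_natCast_add_three_halves (by positivity), div_pow, mul_pow]
        field_simp
        ring
    _ = ∫ x in (0 : ℝ)..1, (1 - x ^ 2) ^ n / ((a + 1) ^ (n + 1) * √a) :=
        integral_smul_comp_rationalCos ha fun x ↦ (1 - x ^ 2) ^ n / ((a + 1) ^ (n + 1) * √a)
    _ = (∏ i ∈ Finset.range n, (2 * (i : ℝ) + 2) / (2 * i + 3)) / ((a + 1) ^ (n + 1) * √a) := by
        rw [intervalIntegral.integral_div, integral_one_sub_sq_pow]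

/-- The key inner-integral evaluation in the proof that `ζ₅ = ζ₄`: for every `u > 0`,
`∫₀¹ v⁵/([4u²(1+u²)+v²]^{7/2} √(1−v²)) dv = (4/15)·1/((1+2u²)⁶ u √(1+u²))`. -/
theorem inner_integral_zeta5_eq_zeta4 (u : ℝ) (hu : 0 < u) :
    ∫ v in (0:ℝ)..1,
        v ^ 5 / ((4 * u ^ 2 * (1 + u ^ 2) + v ^ 2) ^ ((7:ℝ)/2) *
          Real.sqrt (1 - v ^ 2))
      = (4/15) * (1 / ((1 + 2 * u ^ 2) ^ 6 * u * Real.sqrt (1 + u ^ 2))) := by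
  have hsqrt : √(4 * u ^ 2 * (1 + u ^ 2)) = 2 * u * √(1 + u ^ 2) := by
    rw [show 4 * u ^ 2 = (2 * u) ^ 2 by ring, sqrt_mul (by positivity), sqrt_sq (by positivity)]
  have hsquare : 4 * u ^ 2 * (1 + u ^ 2) + 1 = (1 + 2 * u ^ 2) ^ 2 := by ring
  have hexp : (7 : ℝ) / 2 = (2 : ℕ) + 3 / 2 := by norm_num
  have hprod : ∏ i ∈ Finset.range 2, (2 * (i : ℝ) + 2) / (2 * i + 3) = 8 / 15 := by
    norm_num [Finset.prod_range_succ]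
  rw [hexp, integral_pow_div_rpow_mul_sqrt (by positivity) 2, hprod, hsquare, hsqrt]
  field_simp
  ring
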